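/- Let q_n = ⌊n/3⌋ and E_n = 2^{−n} ∑_{σ∈{±1}^n} ν_max(σ). Then q_n − E_n → 0 as n → ∞; equivalently, (1/2^{n−2}) ∑_{k=0}^{q_n−1} (q_n − k)·C(n,k) → 0 as n → ∞. -/

import Mathlib

namespace Napkin

variable {n q : ℕ}

/-- The napkin to the left of seat `s`; napkin `s` itself is the one to the right of
seat `s`, placed between seats `s` and `s + 1` around the circular table. -/
def leftNapkin (s : Fin n) : Fin n := ⟨((s : ℕ) + (n - 1)) % n, Nat.mod_lt _ s.pos⟩

/-- Process the diners `0, 1, …, n-1` in their arrival order.  Here `w i = j` means that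
diner `j` sits in seat `i` (so diner `j` sits in seat `w.symm j`), and `σ j = true`
means diner `j` prefers the napkin to their right.  Each diner takes their preferred
adjacent napkin if it is unclaimed, otherwise the other adjacent napkin if it is
unclaimed, and otherwise is napkinless.  The returned state consists of the set of
claimed napkins and the set of napkinless diners. -/
def dine (σ : Fin n → Bool) (w : Equiv.Perm (Fin n)) :
    Finset (Fin n) × Finset (Fin n) :=
  (List.finRange n).foldl
    (fun st j =>
      let s := w.symm j
      let pref := if σ j then s else leftNapkin s
      let other := if σ j then leftNapkin s else s
      if pref ∉ st.1 then (insert pref st.1, st.2)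
      else if other ∉ st.1 then (insert other st.1, st.2)
      else (st.1, insert j st.2))
    (∅, ∅)

/-- The set of napkinless diners for the seating arrangement `(w, σ)`. -/
def napkinless (σ : Fin n → Bool) (w : Equiv.Perm (Fin n)) : Finset (Fin n) :=
  (dine σ w).2

/-- `ν(w,σ)`, the number of napkinless diners. -/
def nu (σ : Fin n → Bool) (w : Equiv.Perm (Fin n)) : ℕ := (napkinless σ w).card

/-- A seating order puts diner `1` in seat `1` (index `0` here). -/
def IsSeating (w : Equiv.Perm (Fin n)) : Prop :=
  ∀ i : Fin n, (i : ℕ) = 0 → (w i : ℕ) = 0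

instance : DecidablePred (IsSeating (n := n)) := fun w =>
  decidable_of_iff (∀ i : Fin n, (i : ℕ) = 0 → (w i : ℕ) = 0) Iff.rfl

/-- `ν_max(σ)`, the maximal number of napkinless diners over all seating orders. -/
def nuMax (σ : Fin n → Bool) : ℕ :=
  (Finset.univ.filter fun w : Equiv.Perm (Fin n) => IsSeating w).sup (nu σ)

/-- The value `±1` of a napkin preference. -/
def sign (b : Bool) : ℤ := if b then 1 else -1

/-- The drift `h(σ) = max(0, max over prefixes of σ₁ + ⋯ + σᵢ)`. -/
def drift (σ : Fin n → Bool) : ℕ :=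
  (Finset.range (n + 1)).sup fun i =>
    (∑ j ∈ Finset.univ.filter (fun j : Fin n => (j : ℕ) < i), sign (σ j)).toNat

/-- A bench collection: `q` pairwise disjoint triples `aᵢ < bᵢ < cᵢ` in `{1,…,n}`. -/
structure BenchCollection (n q : ℕ) where
  a : Fin q → Fin n
  b : Fin q → Fin n
  c : Fin q → Fin n
  hab : ∀ i, a i < b i
  hbc : ∀ i, b i < c i
  disj : ∀ i j : Fin q, i ≠ j →
    Disjoint ({a i, b i, c i} : Finset (Fin n)) ({a j, b j, c j} : Finset (Fin n))

/-- A bench is balanced when its two smallest members have opposite preferences. -/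
def Balanced (σ : Fin n → Bool) (β : BenchCollection n q) (i : Fin q) : Prop :=
  sign (σ (β.a i)) + sign (σ (β.b i)) = 0

instance (σ : Fin n → Bool) (β : BenchCollection n q) :
    DecidablePred (Balanced σ β) := fun i =>
  decidable_of_iff (sign (σ (β.a i)) + sign (σ (β.b i)) = 0) Iff.rfl

/-- `b(β,σ)`, the number of balanced benches of `β`. -/
def balance (σ : Fin n → Bool) (β : BenchCollection n q) : ℕ :=
  (Finset.univ.filter fun i => Balanced σ β i).card


def step (σ : Fin n → Bool) (w : Equiv.Perm (Fin n)) (st : Finset (Fin n) × Finset (Fin n))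
    (j : Fin n) : Finset (Fin n) × Finset (Fin n) :=
  if (if σ j then w.symm j else leftNapkin (w.symm j)) ∉ st.1 then
    (insert (if σ j then w.symm j else leftNapkin (w.symm j)) st.1, st.2)
  else if (if σ j then leftNapkin (w.symm j) else w.symm j) ∉ st.1 then
    (insert (if σ j then leftNapkin (w.symm j) else w.symm j) st.1, st.2)
  else (st.1, insert j st.2)

def stt (σ : Fin n → Bool) (w : Equiv.Perm (Fin n)) (k : ℕ) :
    Finset (Fin n) × Finset (Fin n) :=
  ((List.finRange n).take k).foldl (step σ w) (∅, ∅)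

theorem stt_n (σ : Fin n → Bool) (w : Equiv.Perm (Fin n)) : stt σ w n = dine σ w := by
  unfold stt dine
  rw [List.take_of_length_le (by simp)]
  rfl

theorem stt_succ (σ : Fin n → Bool) (w : Equiv.Perm (Fin n)) (k : ℕ) (h : k < n) :
    stt σ w (k + 1) = step σ w (stt σ w k) ⟨k, h⟩ := by
  unfold stt
  rw [List.take_succ_eq_append_getElem (by simpa using h), List.foldl_append]
  simp

theorem step_mono (σ : Fin n → Bool) (w : Equiv.Perm (Fin n)) (st : Finset (Fin n) × Finset (Fin n))
    (j : Fin n) : st.1 ⊆ (step σ w st j).1 ∧ st.2 ⊆ (step σ w st j).2 := by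
  unfold step
  split_ifs <;> simp

theorem stt_mono (σ : Fin n → Bool) (w : Equiv.Perm (Fin n)) (k l : ℕ) (h : k ≤ l) (hl : l ≤ n) :
    (stt σ w k).1 ⊆ (stt σ w l).1 ∧ (stt σ w k).2 ⊆ (stt σ w l).2 := by
  induction l, h using Nat.le_induction with
  | base => simp
  | succ l h ih =>
    have := ih (by omega)
    rw [stt_succ σ w l (by omega)]
    have h2 := step_mono σ w (stt σ w l) ⟨l, by omega⟩
    exact ⟨this.1.trans h2.1, this.2.trans h2.2⟩

theorem pref_mem (σ : Fin n → Bool) (w : Equiv.Perm (Fin n)) (j : Fin n) :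
    (if σ j then w.symm j else leftNapkin (w.symm j)) ∈ (stt σ w (j + 1)).1 := by
  rw [stt_succ σ w j j.2]
  unfold step
  by_cases h : (if σ j then w.symm j else leftNapkin (w.symm j)) ∉ (stt σ w j).1
  · rw [if_pos h]; exact Finset.mem_insert_self _ _
  · rw [if_neg h]
    push Not at h
    split_ifs at h ⊢ <;> simp_all

theorem napkinless_of (σ : Fin n → Bool) (w : Equiv.Perm (Fin n)) (j : Fin n)
    (h1 : w.symm j ∈ (stt σ w j).1) (h2 : leftNapkin (w.symm j) ∈ (stt σ w j).1) :
    j ∈ napkinless σ w := by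
  unfold napkinless
  rw [← stt_n]
  apply (stt_mono σ w (j + 1) n j.2 le_rfl).2
  rw [stt_succ σ w j j.2]
  unfold step
  split_ifs <;> simp_all

theorem leftNapkin_eq [NeZero n] (hn : 2 ≤ n) (s : Fin n) : leftNapkin s = s - 1 := by
  apply Fin.ext
  unfold leftNapkin
  rw [Fin.sub_def]
  simp only [Fin.val_one']
  rw [Nat.mod_eq_of_lt (by omega : 1 < n), add_comm]

/-- a good seat -/
def GoodSeat [NeZero n] (σ : Fin n → Bool) (w : Equiv.Perm (Fin n)) (s : Fin n) : Prop :=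
  σ (w (s - 1)) = true ∧ σ (w (s + 1)) = false ∧ w (s - 1) < w s ∧ w (s + 1) < w s

theorem good_napkinless [NeZero n] (hn : 2 ≤ n) (σ : Fin n → Bool) (w : Equiv.Perm (Fin n))
    (s : Fin n) (h : GoodSeat σ w s) : w s ∈ napkinless σ w := by
  obtain ⟨h1, h2, h3, h4⟩ := h
  apply napkinless_of
  · have := pref_mem σ w (w (s + 1))
    simp only [h2, Equiv.symm_apply_apply, leftNapkin_eq hn] at this ⊢
    simp only [Bool.false_eq_true, if_false, add_sub_cancel_right] at this
    exact (stt_mono σ w _ _ (Nat.succ_le_of_lt h4) (w s).2.le).1 this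
  · have := pref_mem σ w (w (s - 1))
    simp only [h1, Equiv.symm_apply_apply, leftNapkin_eq hn] at this ⊢
    simp only [if_true] at this
    exact (stt_mono σ w _ _ (Nat.succ_le_of_lt h3) (w s).2.le).1 this

theorem inv (σ : Fin n → Bool) (w : Equiv.Perm (Fin n)) (k : ℕ) (hk : k ≤ n) :
    ∃ g : Fin n → Fin n,
      (∀ j : Fin n, (j : ℕ) < k → j ∉ (stt σ w k).2 → g j ∈ (stt σ w k).1 ∧
        (g j = w.symm j ∨ g j = leftNapkin (w.symm j))) ∧
      (∀ x ∈ (stt σ w k).1, ∃ j : Fin n, (j : ℕ) < k ∧ j ∉ (stt σ w k).2 ∧ g j = x) ∧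
      (∀ j ∈ (stt σ w k).2, (j : ℕ) < k ∧ w.symm j ∈ (stt σ w k).1 ∧
        leftNapkin (w.symm j) ∈ (stt σ w k).1) := by
  induction k with
  | zero => exact ⟨id, by simp [stt]⟩
  | succ k ih =>
    obtain ⟨g, h1, h2, h3⟩ := ih (by omega)
    have hkn : k < n := by omega
    rw [stt_succ σ w k hkn]
    generalize stt σ w k = S at *
    have key : ∀ x : Fin n, x ∉ S.1 → (x = w.symm ⟨k, hkn⟩ ∨ x = leftNapkin (w.symm ⟨k, hkn⟩)) →
       ∃ g : Fin n → Fin n,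
      (∀ j : Fin n, (j : ℕ) < k + 1 → j ∉ S.2 → g j ∈ insert x S.1 ∧
        (g j = w.symm j ∨ g j = leftNapkin (w.symm j))) ∧
      (∀ y ∈ insert x S.1, ∃ j : Fin n, (j : ℕ) < k + 1 ∧ j ∉ S.2 ∧ g j = y) ∧
      (∀ j ∈ S.2, (j : ℕ) < k + 1 ∧ w.symm j ∈ insert x S.1 ∧
        leftNapkin (w.symm j) ∈ insert x S.1) := by
      intro x hx hx2
      refine ⟨fun j => if (j : ℕ) = k then x else g j, ?_, ?_, ?_⟩
      · intro j hj hjS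
        by_cases hjk : (j : ℕ) = k
        · have : j = ⟨k, hkn⟩ := Fin.ext hjk
          subst this
          simpa using hx2
        · simp only [hjk, if_false]
          have := h1 j (by omega) hjS
          exact ⟨Finset.mem_insert_of_mem this.1, this.2⟩
      · intro y hy
        rcases Finset.mem_insert.1 hy with rfl | hy
        · refine ⟨⟨k, hkn⟩, by simp, ?_, by simp⟩
          intro h
          have := (h3 _ h).1
          simp at this
        · obtain ⟨j, hj, hj2, hj3⟩ := h2 y hy
          exact ⟨j, by omega, hj2, by simp [hj.ne, hj3]⟩
      · intro j hj
        obtain ⟨a, b, c⟩ := h3 j hj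
        exact ⟨by omega, Finset.mem_insert_of_mem b, Finset.mem_insert_of_mem c⟩
    unfold step
    by_cases c1 : (if σ ⟨k, hkn⟩ then w.symm ⟨k, hkn⟩ else leftNapkin (w.symm ⟨k, hkn⟩)) ∉ S.1
    · simp only [if_pos c1]
      apply key _ c1
      split_ifs <;> simp
    · simp only [if_neg c1]
      by_cases c2 : (if σ ⟨k, hkn⟩ then leftNapkin (w.symm ⟨k, hkn⟩) else w.symm ⟨k, hkn⟩) ∉ S.1
      · simp only [if_pos c2]
        apply key _ c2
        split_ifs <;> simp
      · simp only [if_neg c2]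
        refine ⟨g, ?_, ?_, ?_⟩
        · intro j hj hjS
          simp only [Finset.mem_insert, not_or] at hjS
          have : (j : ℕ) ≠ k := fun h => hjS.1 (Fin.ext h)
          exact h1 j (by omega) hjS.2
        · intro x hx
          obtain ⟨j, hj, hj2, hj3⟩ := h2 x hx
          refine ⟨j, by omega, ?_, hj3⟩
          simp only [Finset.mem_insert, not_or]
          exact ⟨fun h => by simp [h] at hj, hj2⟩
        · intro j hj
          rcases Finset.mem_insert.1 hj with rfl | hj
          · refine ⟨by simp, ?_⟩
            split_ifs at c1 c2 <;> simp_all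
          · obtain ⟨a, b, c⟩ := h3 j hj
            exact ⟨by omega, b, c⟩

theorem nu_le (hn : 3 ≤ n) (σ : Fin n → Bool) (w : Equiv.Perm (Fin n)) : nu σ w ≤ n / 3 := by
  haveI : NeZero n := ⟨by omega⟩
  obtain ⟨g, h1, h2, h3⟩ := inv σ w n le_rfl
  rw [stt_n] at h1 h2 h3
  have h1' : (1 : Fin n) ≠ 0 := by
    intro h
    have := congrArg Fin.val h
    rw [Fin.val_one', Nat.mod_eq_of_lt (by omega)] at this
    simp at this
  simp only [leftNapkin_eq (by omega : 2 ≤ n)] at h1 h3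
  set A : Finset (Fin n) := (napkinless σ w).map w.symm.toEmbedding with hA
  have memA : ∀ s, s ∈ A ↔ w s ∈ (dine σ w).2 := by
    intro s
    simp [hA, napkinless, Finset.mem_map, Equiv.symm_apply_eq]
  have hR : ∀ s ∈ A, s + 1 ∉ A ∧ g (w (s + 1)) = s := by
    intro s hs
    have hs' := (memA s).1 hs
    obtain ⟨-, a, b⟩ := h3 _ hs'
    simp only [Equiv.symm_apply_apply] at a b
    obtain ⟨j, -, hj, hgj⟩ := h2 _ a
    have := (h1 j j.2 hj).2
    rw [hgj] at this
    rcases this with h | h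
    · exfalso; apply hj; rw [h] at hs'; simpa using hs'
    · have e : j = w (s + 1) := by rw [h]; simp
      rw [← e]
      refine ⟨?_, hgj⟩
      rw [memA, ← e]; exact hj
  have hL : ∀ s ∈ A, s - 1 ∉ A ∧ g (w (s - 1)) = s - 1 := by
    intro s hs
    have hs' := (memA s).1 hs
    obtain ⟨-, a, b⟩ := h3 _ hs'
    simp only [Equiv.symm_apply_apply] at a b
    obtain ⟨j, -, hj, hgj⟩ := h2 _ b
    have := (h1 j j.2 hj).2
    rw [hgj] at this
    rcases this with h | h
    · have e : j = w (s - 1) := by rw [h]; simp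
      rw [← e]
      refine ⟨?_, hgj⟩
      rw [memA, ← e]; exact hj
    · exfalso; apply hj
      have h' := sub_left_injective h
      rw [h'] at hs'; simpa using hs'
  have d1 : Disjoint A (A.map (Equiv.addRight (1 : Fin n)).toEmbedding) := by
    rw [Finset.disjoint_left]
    intro x hx hx2
    obtain ⟨s, hs, rfl⟩ := Finset.mem_map.1 hx2
    exact (hR s hs).1 (by simpa using hx)
  have d2 : Disjoint (A ∪ (A.map (Equiv.addRight (1 : Fin n)).toEmbedding))
      (A.map (Equiv.subRight (1 : Fin n)).toEmbedding) := by
    rw [Finset.disjoint_left]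
    intro x hx hx2
    obtain ⟨s, hs, rfl⟩ := Finset.mem_map.1 hx2
    rcases Finset.mem_union.1 hx with hx | hx
    · exact (hL s hs).1 (by simpa using hx)
    · obtain ⟨t, ht, hts⟩ := Finset.mem_map.1 hx
      simp at hts
      have a := (hR t ht).2
      have b := (hL s hs).2
      rw [← hts, a] at b
      simp at b
      omega
  have hc : (A ∪ (A.map (Equiv.addRight (1 : Fin n)).toEmbedding) ∪
      (A.map (Equiv.subRight (1 : Fin n)).toEmbedding)).card ≤ n := by
    simpa using Finset.card_le_univ (A ∪ (A.map (Equiv.addRight (1 : Fin n)).toEmbedding) ∪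
      (A.map (Equiv.subRight (1 : Fin n)).toEmbedding))
  rw [Finset.card_union_of_disjoint d2, Finset.card_union_of_disjoint d1] at hc
  simp only [Finset.card_map] at hc
  have : A.card = nu σ w := by simp [hA, nu]
  omega

theorem core (P M : Finset (Fin n)) (hPM : ∀ x, x ∈ P ∨ x ∈ M) 
    (a b c : Fin q → Fin n) (ha : StrictMono a) (hb : StrictMono b) (hc : StrictMono c)
    (haP : ∀ i, a i ∈ P)
    (ha2 : ∀ x ∈ P, (∀ i, a i ≠ x) → ∀ i, a i < x)
    (hb2 : ∀ x ∈ M, (∀ i, b i ≠ x) → ∀ i, b i < x)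
    (hca : ∀ i k, a k ≠ c i) (hcb : ∀ i k, b k ≠ c i)
    (H : ∀ t, (P.filter (· ≤ t)).card ≤ (M.filter (· ≤ t)).card + q) (i : Fin q) :
    b i < c i := by
  by_contra hcon
  push Not at hcon
  have hcP : ∀ j ≤ i, c j ∈ P := by
    intro j hj
    rcases hPM (c j) with h | h
    · exact h
    · have h1 := hb2 _ h (hcb j) i
      have h2 := hc.monotone hj
      exact absurd (h1.trans_le (h2.trans hcon)) (lt_irrefl _)
  have hac : ∀ j ≤ i, ∀ k, a k < c j := fun j hj k => ha2 _ (hcP j hj) (hca j) k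
  have d : Disjoint (Finset.univ.image a) ((Finset.Iic i).image c) := by
    rw [Finset.disjoint_left]
    intro x hx hx2
    simp only [Finset.mem_image] at hx hx2
    obtain ⟨k, -, rfl⟩ := hx
    obtain ⟨j, -, hj⟩ := hx2
    exact hca j k hj.symm
  have s1 : Finset.univ.image a ∪ (Finset.Iic i).image c ⊆ P.filter (· ≤ c i) := by
    intro x hx
    simp only [Finset.mem_union, Finset.mem_image, Finset.mem_filter, Finset.mem_Iic] at hx ⊢
    rcases hx with ⟨k, -, rfl⟩ | ⟨j, hj, rfl⟩
    · exact ⟨haP k, (hac i le_rfl k).le⟩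
    · exact ⟨hcP j hj, hc.monotone hj⟩
  have s2 : M.filter (· ≤ c i) ⊆ (Finset.Iio i).image b := by
    intro x hx
    simp only [Finset.mem_image, Finset.mem_filter, Finset.mem_Iio] at hx ⊢
    by_contra h
    by_cases hr : ∃ k, b k = x
    · obtain ⟨k, rfl⟩ := hr
      have hk : b k ≤ b i := hx.2.trans hcon
      rcases (hb.le_iff_le.1 hk).lt_or_eq with h' | h'
      · exact h ⟨k, h', rfl⟩
      · subst h'
        exact hcb k k (le_antisymm hx.2 hcon)
    · push Not at hr
      exact absurd ((hb2 x hx.1 hr i).trans_le (hx.2.trans hcon)) (lt_irrefl _)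
  have c1 := Finset.card_le_card s1
  have c2 := Finset.card_le_card s2
  rw [Finset.card_union_of_disjoint d, Finset.card_image_of_injective _ ha.injective,
    Finset.card_image_of_injective _ hc.injective] at c1
  have c3 := Finset.card_image_le (s := Finset.Iio i) (f := b)
  simp at c1 c3
  have := H (c i)
  omega

theorem exists_first (P : Finset (Fin n)) (h : q ≤ P.card) :
    ∃ a : Fin q → Fin n, StrictMono a ∧ (∀ i, a i ∈ P) ∧
      (∀ x ∈ P, (∀ i, a i ≠ x) → ∀ i, a i < x) := by
  refine ⟨fun i => P.orderEmbOfFin rfl (Fin.castLE h i), ?_, ?_, ?_⟩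
  · intro i j hij
    simpa using hij
  · intro i; exact Finset.orderEmbOfFin_mem _ _ _
  · intro x hx hne i
    have : x ∈ Set.range (P.orderEmbOfFin rfl) := by rw [Finset.range_orderEmbOfFin]; exact hx
    obtain ⟨k, rfl⟩ := this
    rw [OrderEmbedding.lt_iff_lt]
    by_contra hk
    push Not at hk
    have hk' : (k : ℕ) ≤ i := hk
    exact hne ⟨k, lt_of_le_of_lt hk' i.2⟩ (by congr 1)

theorem exists_perm_extend {α β : Type*} [Fintype α] [DecidableEq α] (e f : β → α)
    (he : Function.Injective e) (hf : Function.Injective f) :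
    ∃ w : Equiv.Perm α, ∀ x, w (e x) = f x := by
  classical
  let E : {x // x ∈ Set.range e} ≃ {x // x ∈ Set.range f} :=
    (Equiv.ofInjective e he).symm.trans (Equiv.ofInjective f hf)
  refine ⟨E.extendSubtype, fun x => ?_⟩
  rw [Equiv.extendSubtype_apply_of_mem E (e x) ⟨x, rfl⟩]
  have : (⟨e x, ⟨x, rfl⟩⟩ : {x // x ∈ Set.range e}) = Equiv.ofInjective e he x := rfl
  simp only [E, Equiv.trans_apply]
  rw [this, Equiv.symm_apply_apply]
  rfl

/-- number of good seats bound for arbitrary permutation -/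
theorem nuMax_ge [NeZero n] (hn : 2 ≤ n) (σ : Fin n → Bool) (w0 : Equiv.Perm (Fin n))
    (e : Fin q → Fin n) (he : Function.Injective e) (h : ∀ i, GoodSeat σ w0 (e i)) :
    q ≤ nuMax σ := by
  set k := w0.symm 0 with hk
  set w : Equiv.Perm (Fin n) := (Equiv.addRight k).trans w0 with hw
  have hwa : ∀ s, w s = w0 (s + k) := fun s => by simp [hw]
  have hs : IsSeating w := by
    intro i hi
    have : i = 0 := Fin.ext (by simpa using hi)
    subst this
    rw [hwa, zero_add, hk]; simp
  have hg : ∀ i, GoodSeat σ w (e i - k) := by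
    intro i
    have := h i
    unfold GoodSeat at this ⊢
    simp only [hwa]
    rw [show e i - k - 1 + k = e i - 1 by abel, show e i - k + 1 + k = e i + 1 by abel,
      show e i - k + k = e i by abel]
    exact this
  have h1 : q ≤ nu σ w := by
    have : (Finset.univ.image (fun i => w (e i - k))) ⊆ napkinless σ w := by
      intro x hx
      obtain ⟨i, -, rfl⟩ := Finset.mem_image.1 hx
      exact good_napkinless hn σ w _ (hg i)
    have := Finset.card_le_card this
    rw [Finset.card_image_of_injective _ (by
      intro i j hij
      exact he (sub_left_injective (w.injective hij)))] at this
    simpa [nu] using this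
  refine h1.trans ?_
  unfold nuMax
  exact Finset.le_sup (f := nu σ) (by simpa using hs)

theorem construct (hn : 3 ≤ n) (σ : Fin n → Bool)
    (H : ∀ c : Bool, ∀ t : Fin n, ((Finset.univ.filter (fun j => σ j = c)).filter (· ≤ t)).card ≤
      ((Finset.univ.filter (fun j => σ j = !c)).filter (· ≤ t)).card + n / 3) :
    n / 3 ≤ nuMax σ := by
  haveI : NeZero n := ⟨by omega⟩
  set q := n / 3 with hq
  set P := Finset.univ.filter (fun j => σ j = true) with hP
  set M := Finset.univ.filter (fun j => σ j = false) with hM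
  have hPM : ∀ x, x ∈ P ∨ x ∈ M := by intro x; simp [hP, hM]
  have hdis : Disjoint P M := by
    rw [Finset.disjoint_left]; intro x; simp [hP, hM]
  have H1 : ∀ t, (P.filter (· ≤ t)).card ≤ (M.filter (· ≤ t)).card + q := H true
  have H2 : ∀ t, (M.filter (· ≤ t)).card ≤ (P.filter (· ≤ t)).card + q := H false
  have hcard : P.card + M.card = n := by
    rw [← Finset.card_union_of_disjoint hdis]
    have : P ∪ M = Finset.univ := by ext x; simpa using hPM x
    rw [this]; simp
  have hlast : ∀ x : Fin n, x ≤ ⟨n - 1, by omega⟩ := fun x => by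
    rw [Fin.le_def]; simp; omega
  have H1' := H1 ⟨n - 1, by omega⟩
  have H2' := H2 ⟨n - 1, by omega⟩
  simp only [hlast, Finset.filter_true] at H1' H2'
  obtain ⟨a, ha, haP, ha2⟩ := exists_first (q := q) P (by omega)
  obtain ⟨b, hb, hbM, hb2⟩ := exists_first (q := q) M (by omega)
  set R := Finset.univ \ (Finset.univ.image a ∪ Finset.univ.image b) with hR
  have hRc : q ≤ R.card := by
    rw [hR, Finset.card_sdiff_of_subset (Finset.subset_univ _)]
    have h1 := Finset.card_union_le (Finset.univ.image a) (Finset.univ.image b)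
    have h2 := Finset.card_image_le (s := Finset.univ) (f := a)
    have h3 := Finset.card_image_le (s := Finset.univ) (f := b)
    simp at h2 h3 ⊢
    omega
  obtain ⟨c, hc, hcR, -⟩ := exists_first (q := q) R hRc
  have hca : ∀ i k, a k ≠ c i := by
    intro i k h
    have := hcR i
    simp [hR] at this
    exact this.1 k h
  have hcb : ∀ i k, b k ≠ c i := by
    intro i k h
    have := hcR i
    simp [hR] at this
    exact this.2 k h
  have hab : ∀ i k, a i ≠ b k := by
    intro i k h
    exact Finset.disjoint_left.1 hdis (haP i) (h ▸ hbM k)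
  have hbc := core P M hPM a b c ha hb hc haP ha2 hb2 hca hcb H1
  have hac := core M P (fun x => (hPM x).symm) b a c hb ha hc hbM hb2 ha2 hcb hca H2
  have hlt : ∀ (i : Fin q) (k : Fin 3), 3 * (i : ℕ) + k < n := by
    intro i k; have := i.2; have := k.2; omega
  let e : Fin q × Fin 3 → Fin n := fun x => ⟨3 * (x.1 : ℕ) + x.2, hlt _ _⟩
  have he : Function.Injective e := by
    rintro ⟨i, k⟩ ⟨j, l⟩ h
    simp only [e, Fin.mk.injEq] at h
    have := k.2; have := l.2
    ext
    · show (i : ℕ) = j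
      omega
    · show (k : ℕ) = l
      omega
  let f : Fin q × Fin 3 → Fin n := fun x => ![a x.1, c x.1, b x.1] x.2
  have hf : Function.Injective f := by
    rintro ⟨i, k⟩ ⟨j, l⟩ h
    fin_cases k <;> fin_cases l <;> simp [f] at h ⊢
    · exact ha.injective h
    · exact hca _ _ h
    · exact hab _ _ h
    · exact hca _ _ h.symm
    · exact hc.injective h
    · exact hcb _ _ h.symm
    · exact hab _ _ h.symm
    · exact hcb _ _ h
    · exact hb.injective h
  obtain ⟨w, hw⟩ := exists_perm_extend e f he hf
  refine nuMax_ge (by omega) σ w (fun i => e (i, 1)) (fun i j h => by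
    have := he h; simpa using this) ?_
  intro i
  have v1 : ((1 : Fin n) : ℕ) = 1 := by rw [Fin.val_one', Nat.mod_eq_of_lt (by omega)]
  have hi := i.2
  have e1 : e (i, 1) + 1 = e (i, 2) := by
    apply Fin.ext
    rw [Fin.val_add, v1]
    simp only [e]
    rw [Nat.mod_eq_of_lt]
    · simp
    · simp; omega
  have e0 : e (i, 1) - 1 = e (i, 0) := by
    rw [sub_eq_iff_eq_add]
    apply Fin.ext
    rw [Fin.val_add, v1]
    simp only [e]
    rw [Nat.mod_eq_of_lt]
    · simp
    · simp; omega
  have ma := haP i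
  have mb := hbM i
  simp [hP] at ma
  simp [hM] at mb
  unfold GoodSeat
  simp only [e1, e0, hw]
  simp only [f]
  exact ⟨ma, mb, hac i, hbc i⟩

theorem bad_count (A : Finset (Fin n)) (c : Bool) (q : ℕ) :
    ((Finset.univ.filter (fun σ : Fin n → Bool =>
      ((Finset.univ.filter (fun j => σ j = !c)).filter (· ∈ A)).card + q <
      ((Finset.univ.filter (fun j => σ j = c)).filter (· ∈ A)).card)).card : ℝ) * 2 ^ q
      ≤ (5 / 2) ^ n := by
  let F : Fin n → Bool → ℝ := fun j b => if j ∈ A then (if b = c then 2 else 1 / 2) else 1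
  have hF : ∀ j b, 0 < F j b := by
    intro j b; simp only [F]; split_ifs <;> norm_num
  have h1 : ∑ σ : Fin n → Bool, ∏ j, F j (σ j) = ∏ j, ∑ b, F j b := by
    rw [Finset.prod_univ_sum, Fintype.piFinset_univ]
  have h2 : ∏ j, ∑ b, F j b ≤ (5 / 2 : ℝ) ^ n := by
    calc ∏ j, ∑ b, F j b ≤ ∏ j : Fin n, (5 / 2 : ℝ) := by
          apply Finset.prod_le_prod
          · intro j _; exact Finset.sum_nonneg fun b _ => (hF j b).le
          · intro j _
            simp only [Fintype.sum_bool, F]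
            cases c <;> split_ifs <;> norm_num at *
      _ = _ := by rw [Finset.prod_const, Finset.card_univ, Fintype.card_fin]
  have h3 : ∀ σ : Fin n → Bool, ∏ j, F j (σ j) =
      2 ^ ((Finset.univ.filter (fun j => σ j = c)).filter (· ∈ A)).card *
      (1 / 2) ^ ((Finset.univ.filter (fun j => σ j = !c)).filter (· ∈ A)).card := by
    intro σ
    rw [← Finset.prod_const, ← Finset.prod_const, Finset.prod_filter, Finset.prod_filter,
      Finset.prod_filter, Finset.prod_filter, ← Finset.prod_mul_distrib]
    apply Finset.prod_congr rfl
    intro j _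
    simp only [F]
    cases c <;> cases σ j <;> by_cases hj : j ∈ A <;> simp [hj]
  rw [← nsmul_eq_mul, ← Finset.sum_const]
  calc _ ≤ ∑ σ ∈ (Finset.univ.filter (fun σ : Fin n → Bool =>
      ((Finset.univ.filter (fun j => σ j = !c)).filter (· ∈ A)).card + q <
      ((Finset.univ.filter (fun j => σ j = c)).filter (· ∈ A)).card)), ∏ j, F j (σ j) := by
        apply Finset.sum_le_sum
        intro σ hσ
        rw [h3]
        simp only [Finset.mem_filter, Finset.mem_univ, true_and] at hσ
        rw [one_div, inv_pow, ← div_eq_mul_inv, le_div_iff₀ (by positivity), ← pow_add]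
        apply pow_le_pow_right₀ (by norm_num)
        omega
    _ ≤ ∑ σ : Fin n → Bool, ∏ j, F j (σ j) := by
        apply Finset.sum_le_sum_of_subset_of_nonneg (Finset.subset_univ _)
        intro σ _ _
        exact Finset.prod_nonneg fun j _ => (hF _ _).le
    _ ≤ _ := by rw [h1]; exact h2

theorem bad_total (hn : 3 ≤ n) :
    ((Finset.univ.filter (fun σ : Fin n → Bool => nuMax σ < n / 3)).card : ℝ) * 2 ^ (n / 3)
      ≤ 2 * n * (5 / 2) ^ n := by
  classical
  let B : Bool × Fin n → Finset (Fin n → Bool) := fun x =>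
    Finset.univ.filter (fun σ : Fin n → Bool =>
      ((Finset.univ.filter (fun j => σ j = !x.1)).filter (· ∈ Finset.Iic x.2)).card + n / 3 <
      ((Finset.univ.filter (fun j => σ j = x.1)).filter (· ∈ Finset.Iic x.2)).card)
  have hsub : Finset.univ.filter (fun σ : Fin n → Bool => nuMax σ < n / 3) ⊆
      Finset.univ.biUnion B := by
    intro σ hσ
    simp only [Finset.mem_filter, Finset.mem_univ, true_and] at hσ
    by_contra hcon
    have := construct hn σ (by
      intro c t
      by_contra h
      apply hcon
      simp only [Finset.mem_biUnion]
      refine ⟨(c, t), Finset.mem_univ _, ?_⟩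
      simp only [B, Finset.mem_filter_univ, Finset.mem_Iic]
      exact not_le.1 h)
    omega
  have h1 : ((Finset.univ.filter (fun σ : Fin n → Bool => nuMax σ < n / 3)).card : ℝ) ≤
      ∑ x, ((B x).card : ℝ) := by
    exact_mod_cast (Finset.card_le_card hsub).trans Finset.card_biUnion_le
  calc _ ≤ (∑ x, ((B x).card : ℝ)) * 2 ^ (n / 3) := by gcongr
    _ = ∑ x, ((B x).card : ℝ) * 2 ^ (n / 3) := by rw [Finset.sum_mul]
    _ ≤ ∑ x : Bool × Fin n, (5 / 2 : ℝ) ^ n :=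
        Finset.sum_le_sum fun x _ => bad_count (Finset.Iic x.2) x.1 (n / 3)
    _ = _ := by simp

theorem part1_bound (hn : 3 ≤ n) :
    0 ≤ ((n / 3 : ℕ) : ℝ) - (∑ σ : Fin n → Bool, (nuMax σ : ℝ)) / 2 ^ n ∧
    ((n / 3 : ℕ) : ℝ) - (∑ σ : Fin n → Bool, (nuMax σ : ℝ)) / 2 ^ n ≤
      20 * ((n / 3 : ℕ) : ℝ) ^ 2 * (125 / 128) ^ (n / 3) := by
  have hle : ∀ σ : Fin n → Bool, nuMax σ ≤ n / 3 := fun σ =>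
    Finset.sup_le fun w _ => nu_le hn σ w
  have hcard : ∑ σ : Fin n → Bool, ((n / 3 : ℕ) : ℝ) = 2 ^ n * ((n / 3 : ℕ) : ℝ) := by simp
  have heq : ((n / 3 : ℕ) : ℝ) - (∑ σ : Fin n → Bool, (nuMax σ : ℝ)) / 2 ^ n =
      (∑ σ : Fin n → Bool, (((n / 3 : ℕ) : ℝ) - (nuMax σ : ℝ))) / 2 ^ n := by
    rw [Finset.sum_sub_distrib, hcard]
    field_simp
  rw [heq]
  constructor
  · apply div_nonneg _ (by positivity)
    apply Finset.sum_nonneg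
    intro σ _
    have : (nuMax σ : ℝ) ≤ ((n / 3 : ℕ) : ℝ) := by exact_mod_cast hle σ
    linarith
  · rw [div_le_iff₀ (by positivity)]
    have hb := bad_total hn
    set b := (Finset.univ.filter (fun σ : Fin n → Bool => nuMax σ < n / 3)).card with hbdef
    have h1 : ∑ σ : Fin n → Bool, (((n / 3 : ℕ) : ℝ) - (nuMax σ : ℝ)) ≤ b * ((n / 3 : ℕ) : ℝ) := by
      rw [hbdef, ← nsmul_eq_mul, ← Finset.sum_const, Finset.sum_filter]
      apply Finset.sum_le_sum
      intro σ _
      split_ifs with h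
      · have : (0 : ℝ) ≤ nuMax σ := by positivity
        linarith
      · have : ((n / 3 : ℕ) : ℝ) ≤ nuMax σ := by exact_mod_cast not_lt.1 h
        linarith
    have h2 : (5 / 4 : ℝ) ^ n ≤ 25 / 16 * (125 / 64) ^ (n / 3) := by
      calc (5 / 4 : ℝ) ^ n ≤ (5 / 4) ^ (2 + 3 * (n / 3)) :=
            pow_le_pow_right₀ (by norm_num) (by omega)
        _ = _ := by rw [pow_add, pow_mul]; norm_num
    have h3 : (n : ℝ) ≤ 5 * ((n / 3 : ℕ) : ℝ) := by
      have : n ≤ 5 * (n / 3) := by omega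
      exact_mod_cast this
    set Q := ((n / 3 : ℕ) : ℝ) with hQ
    have hQ0 : 0 ≤ Q := by positivity
    refine h1.trans ?_
    have h5 : (5 / 2 : ℝ) ^ n = (5 / 4) ^ n * 2 ^ n := by rw [← mul_pow]; norm_num
    have h6 : (125 / 64 : ℝ) ^ (n / 3) = (125 / 128) ^ (n / 3) * 2 ^ (n / 3) := by
      rw [← mul_pow]; norm_num
    have h7 : (b : ℝ) * 2 ^ (n / 3) ≤
        (20 * Q * (125 / 128) ^ (n / 3) * 2 ^ n) * 2 ^ (n / 3) := by
      calc (b : ℝ) * 2 ^ (n / 3) ≤ 2 * (n : ℝ) * (5 / 2 : ℝ) ^ n := hb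
        _ ≤ 2 * (5 * Q) * ((25 / 16 * (125 / 64) ^ (n / 3)) * 2 ^ n) := by
            rw [h5]; gcongr
        _ = 125 / 8 * (Q * (125 / 128) ^ (n / 3) * 2 ^ n * 2 ^ (n / 3)) := by rw [h6]; ring
        _ ≤ 20 * (Q * (125 / 128) ^ (n / 3) * 2 ^ n * 2 ^ (n / 3)) := by gcongr; norm_num
        _ = _ := by ring
    have h8 := le_of_mul_le_mul_right h7 (by positivity)
    calc (b : ℝ) * Q ≤ (20 * Q * (125 / 128) ^ (n / 3) * 2 ^ n) * Q := by gcongr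
      _ = _ := by ring

theorem part2_bound (hn : 3 ≤ n) :
    0 ≤ (1 / 2 ^ (n - 2) : ℝ) *
        ∑ k ∈ Finset.range (n / 3), (((n / 3 : ℕ) : ℝ) - (k : ℝ)) * (n.choose k : ℝ) ∧
    (1 / 2 ^ (n - 2) : ℝ) *
        ∑ k ∈ Finset.range (n / 3), (((n / 3 : ℕ) : ℝ) - (k : ℝ)) * (n.choose k : ℝ) ≤
      20 * ((n / 3 : ℕ) : ℝ) ^ 2 * (125 / 128) ^ (n / 3) := by
  set r := n / 3 with hr
  have hkr : ∀ k ∈ Finset.range r, (k : ℝ) ≤ (r : ℝ) := fun k hk => by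
    exact_mod_cast (Finset.mem_range.1 hk).le
  constructor
  · apply mul_nonneg (by positivity)
    apply Finset.sum_nonneg
    intro k hk
    exact mul_nonneg (sub_nonneg.2 (hkr k hk)) (by positivity)
  · have h1 : ∑ k ∈ Finset.range r, ((r : ℝ) - (k : ℝ)) * (n.choose k : ℝ) ≤
        r * (2 ^ r * (3 / 2) ^ n) := by
      have hb : (3 / 2 : ℝ) ^ n = ∑ k ∈ Finset.range (n + 1), (1 / 2 : ℝ) ^ k * n.choose k := by
        rw [show (3 / 2 : ℝ) = 1 / 2 + 1 by norm_num, add_pow]; simp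
      rw [hb, Finset.mul_sum, Finset.mul_sum]
      calc _ ≤ ∑ k ∈ Finset.range r, (r : ℝ) * (2 ^ r * ((1 / 2 : ℝ) ^ k * n.choose k)) := by
            apply Finset.sum_le_sum
            intro k hk
            have hk' := Finset.mem_range.1 hk
            have : (1 : ℝ) ≤ 2 ^ r * (1 / 2) ^ k := by
              rw [one_div, inv_pow, ← div_eq_mul_inv, le_div_iff₀ (by positivity), one_mul]
              exact pow_le_pow_right₀ (by norm_num) hk'.le
            have h0 : (0 : ℝ) ≤ k := by positivity
            calc ((r : ℝ) - k) * n.choose k ≤ r * (1 * n.choose k) := by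
                  rw [one_mul]; gcongr; linarith
              _ ≤ r * ((2 ^ r * (1 / 2) ^ k) * n.choose k) := by gcongr
              _ = _ := by ring
        _ ≤ _ := by
            apply Finset.sum_le_sum_of_subset_of_nonneg
            · intro k; simp; omega
            · intros; positivity
    have h2 : (2 : ℝ) ^ n = 4 * 2 ^ (n - 2) := by
      rw [show (4 : ℝ) = 2 ^ 2 by norm_num, ← pow_add]; congr 1; omega
    have h3 : (3 / 4 : ℝ) ^ n ≤ (27 / 64) ^ r := by
      calc (3 / 4 : ℝ) ^ n ≤ (3 / 4) ^ (3 * r) :=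
            pow_le_pow_of_le_one (by norm_num) (by norm_num) (by omega)
        _ = _ := by rw [pow_mul]; norm_num
    have h4 : (3 / 2 : ℝ) ^ n = (3 / 4) ^ n * (4 * 2 ^ (n - 2)) := by
      rw [← h2, ← mul_pow]; norm_num
    have h5 : (r : ℝ) ≤ r ^ 2 := by
      have : 1 ≤ r := by omega
      have : (1 : ℝ) ≤ r := by exact_mod_cast this
      nlinarith
    rw [one_div, inv_mul_le_iff₀ (by positivity)]
    calc _ ≤ _ := h1
      _ = 4 * r * (2 ^ r * (3 / 4) ^ n) * 2 ^ (n - 2) := by rw [h4]; ring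
      _ ≤ 20 * (r : ℝ) ^ 2 * (2 ^ r * (27 / 64) ^ r) * 2 ^ (n - 2) := by gcongr; norm_num
      _ = 20 * (r : ℝ) ^ 2 * (27 / 32) ^ r * 2 ^ (n - 2) := by rw [← mul_pow]; norm_num
      _ ≤ 20 * (r : ℝ) ^ 2 * (125 / 128) ^ r * 2 ^ (n - 2) := by
          have : (27 / 32 : ℝ) ^ r ≤ (125 / 128) ^ r :=
            pow_le_pow_left₀ (by norm_num) (by norm_num) r
          gcongr
      _ = _ := by ring

theorem bound_tendsto : Filter.Tendsto
    (fun n : ℕ => 20 * ((n / 3 : ℕ) : ℝ) ^ 2 * (125 / 128) ^ (n / 3)) Filter.atTop (nhds 0) := by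
  have h := tendsto_pow_const_mul_const_pow_of_lt_one 2 (r := (125 / 128 : ℝ))
    (by norm_num) (by norm_num)
  have h2 := (h.const_mul 20).comp (Nat.tendsto_div_const_atTop (n := 3) (by norm_num))
  simp only [mul_zero] at h2
  refine h2.congr fun n => ?_
  simp only [Function.comp]
  ring

/-- With `q_n = ⌊n/3⌋` and `E_n = 2^{-n} ∑_σ ν_max(σ)`, we have
`q_n - E_n → 0` as `n → ∞`; equivalently
`2^{-(n-2)} ∑_{k<q_n} (q_n - k)·C(n,k) → 0`. -/
theorem statement16 :
    Filter.Tendsto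
      (fun n : ℕ => ((n / 3 : ℕ) : ℝ) - (∑ σ : Fin n → Bool, (nuMax σ : ℝ)) / 2 ^ n)
      Filter.atTop (nhds 0) ∧
    Filter.Tendsto
      (fun n : ℕ => (1 / 2 ^ (n - 2) : ℝ) *
        ∑ k ∈ Finset.range (n / 3), (((n / 3 : ℕ) : ℝ) - (k : ℝ)) * (n.choose k : ℝ))
      Filter.atTop (nhds 0) := by
  constructor
  · apply squeeze_zero' _ _ bound_tendsto
    · filter_upwards [Filter.eventually_ge_atTop 3] with n hn using (part1_bound hn).1
    · filter_upwards [Filter.eventually_ge_atTop 3] with n hn using (part1_bound hn).2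
  · apply squeeze_zero' _ _ bound_tendsto
    · filter_upwards [Filter.eventually_ge_atTop 3] with n hn using (part2_bound hn).1
    · filter_upwards [Filter.eventually_ge_atTop 3] with n hn using (part2_bound hn).2

end Napkin
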